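/- Let 𝒫 be a partition of a finite abelian group G having the singleton {0} as one of its blocks, and let n ≥ 1. Then the dual of the induced symmetrized partition 𝒫ⁿ_sym of Gⁿ equals the symmetrized partition induced by the dual: (𝒫ⁿ_sym)̂ = (𝒫̂)ⁿ_sym (as partitions of Ĝⁿ, where the zero element of Ĝ is the principal character ε). Consequently, if 𝒫 is Fourier-reflexive, then 𝒫ⁿ_sym is Fourier-reflexive. -/

import Mathlib

open Finset
open scoped Classical

variable {G : Type*} [AddCommGroup G] [Fintype G]

/-- The sum `Σ_{g ∈ P_c} χ(g)` of the character `χ` over the block of the partition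
(setoid) `P` of `G` indexed by `c`. -/
noncomputable def blockSum (P : Setoid G) (χ : AddChar G ℂ) (c : Quotient P) : ℂ :=
  ∑ g : G, if Quotient.mk P g = c then χ g else 0

/-- The dual partition `P̂` of the character group `Ĝ`:  `χ ∼ χ'` iff the sums of `χ` and of
`χ'` over each block of `P` agree. -/
noncomputable def dualSetoid (P : Setoid G) : Setoid (AddChar G ℂ) :=
  Setoid.ker (blockSum P)

/-- The sum `Σ_{χ ∈ Q_c} χ(g)` over the block of the dual partition indexed by `c`. -/
noncomputable def dualBlockSum (P : Setoid G) (g : G) (c : Quotient (dualSetoid P)) : ℂ :=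
  ∑ᶠ χ : AddChar G ℂ, if Quotient.mk (dualSetoid P) χ = c then χ g else 0

/-- The bidual partition `P̂̂`, viewed as a partition of `G` by identifying the double
character group with `G` via `g(χ) = χ(g)`. -/
noncomputable def bidualSetoid (P : Setoid G) : Setoid G :=
  Setoid.ker (dualBlockSum P)

variable {ι : Type*} [Fintype ι] [DecidableEq ι]
  {H : ι → Type*} [∀ i, AddCommGroup (H i)] [∀ i, Fintype (H i)]

/-- The `i`-th component of a character of a product group, under the canonical
identification of the character group of a product with the product of the character
groups. -/
noncomputable def comp1 (χ : AddChar (∀ i, H i) ℂ) (i : ι) : AddChar (H i) ℂ :=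
  χ.compAddMonoidHom (AddMonoidHom.single H i)

/-- The symmetrized partition `Pⁿ_sym` of `Gⁿ` induced by a partition `P` of `G`:
two tuples are equivalent iff they have the same composition vector, i.e. the same
number of entries in each block of `P`. -/
noncomputable def symSetoid {A : Type*} (P : Setoid A) (n : ℕ) : Setoid (Fin n → A) :=
  Setoid.ker fun g (c : Quotient P) =>
    (Finset.univ.filter fun t : Fin n => Quotient.mk P (g t) = c).card

/-- A product of linear forms, all of them with coefficient `1` at a fixed variable, determines
the multiset of its factors. -/
theorem multiset_eq_of_prod_sumSMulX_eq {σ k : Type*} [Field k] (i : σ)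
    {S T : Multiset (σ →₀ k)} (hS : ∀ v ∈ S, v i = 1) (hT : ∀ v ∈ T, v i = 1)
    (h : (S.map MvPolynomial.sumSMulX).prod = (T.map MvPolynomial.sumSMulX).prod) : S = T := by
  have irr : ∀ v : σ →₀ k, v i = 1 → Irreducible (MvPolynomial.sumSMulX v) := fun v hv =>
    MvPolynomial.irreducible_sumSMulX v ⟨i, by simp [hv]⟩
      fun r hr => isUnit_of_dvd_one (hv ▸ hr i)
  have rel := UniqueFactorizationMonoid.factors_unique
    (f := S.map MvPolynomial.sumSMulX) (g := T.map MvPolynomial.sumSMulX)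
    (by simpa using fun v hv => irr v (hS v hv)) (by simpa using fun v hv => irr v (hT v hv))
    (h ▸ Associated.refl _)
  rw [Multiset.rel_map] at rel
  rw [← Multiset.rel_eq]
  refine rel.mono fun v hv w hw hvw => ?_
  obtain ⟨u, hu⟩ := hvw
  obtain ⟨r, -, hr⟩ := MvPolynomial.isUnit_iff_eq_C_of_isReduced.mp u.isUnit
  have hcoeff : ∀ j, v j * r = w j := fun j => by
    rw [← MvPolynomial.coeff_sumSMulX v, ← MvPolynomial.coeff_sumSMulX w, ← hu, hr,
      mul_comm _ (MvPolynomial.C r), MvPolynomial.coeff_C_mul, mul_comm]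
  have hr1 : r = 1 := by simpa [hS v hv, hT w hw] using hcoeff i
  ext j
  simpa [hr1] using hcoeff j

/-- The sum of `f` over each block of the partition `K`, as a finitely supported function. -/
noncomputable def blockSums {A : Type*} [Fintype A] (K : Setoid A) (f : A → ℂ) :
    Quotient K →₀ ℂ :=
  ∑ a, Finsupp.single (Quotient.mk K a) (f a)

theorem blockSums_apply {A : Type*} [Fintype A] (K : Setoid A) (f : A → ℂ) (c : Quotient K) :
    blockSums K f c = ∑ a, if Quotient.mk K a = c then f a else 0 := by
  simp [blockSums, Finsupp.finsetSum_apply, Finsupp.single_apply]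

theorem blockSums_eq_iff {A : Type*} [Fintype A] {K : Setoid A} {f f' : A → ℂ} :
    blockSums K f = blockSums K f' ↔
      ∀ b, ∑ a with K.r a b, f a = ∑ a with K.r a b, f' a := by
  rw [DFunLike.ext_iff, Quotient.forall]
  simp only [blockSums_apply, Finset.sum_filter, Quotient.eq]

/-- The blocks of the symmetrized partition are the fibres of the multiset of classes. -/
theorem symSetoid_r_iff {A : Type*} {K : Setoid A} {n : ℕ} {a b : Fin n → A} :
    (symSetoid K n).r a b ↔
      univ.val.map (fun t => Quotient.mk K (a t)) = univ.val.map fun t => Quotient.mk K (b t) := by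
  rw [Multiset.ext]
  refine funext_iff.trans (forall_congr' fun c => ?_)
  simp only [Multiset.count_map, Finset.card_def, Finset.filter_val, eq_comm]

theorem symSetoid_ker_r_iff {A B : Type*} {f : A → B} {n : ℕ} {a b : Fin n → A} :
    (symSetoid (Setoid.ker f) n).r a b ↔
      univ.val.map (fun t => f (a t)) = univ.val.map fun t => f (b t) := by
  rw [symSetoid_r_iff, ← (Multiset.map_injective (Setoid.kerLift_injective f)).eq_iff,
    Multiset.map_map, Multiset.map_map]
  rfl

/-- The block sums of a product function over the symmetrized partition are the coefficients of
the product of the linear forms given by the block sums of the factors. -/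
theorem prod_sumSMulX_blockSums {A : Type*} [Fintype A] (K : Setoid A) {n : ℕ}
    (f : Fin n → A → ℂ) :
    ∏ t, MvPolynomial.sumSMulX (blockSums K (f t)) =
      ∑ a : Fin n → A, MvPolynomial.monomial
        (Multiset.toFinsupp (univ.val.map fun t => Quotient.mk K (a t))) (∏ t, f t (a t)) := by
  have hlin : ∀ t, MvPolynomial.sumSMulX (blockSums K (f t)) =
      ∑ a, MvPolynomial.monomial (Finsupp.single (Quotient.mk K a) 1) (f t a) := fun t => by
    simp [blockSums, MvPolynomial.sumSMulX, MvPolynomial.X, MvPolynomial.smul_monomial]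
  simp only [hlin, Finset.prod_univ_sum, Fintype.piFinset_univ]
  refine Finset.sum_congr rfl fun a _ => ?_
  rw [← MvPolynomial.monomial_sum_prod]
  congr 2
  rw [eq_comm, Multiset.toFinsupp_eq_iff, Finsupp.toMultiset_sum]
  simp only [Finsupp.toMultiset_single, one_smul, Finset.sum]
  rw [← Multiset.sum_map_singleton (univ.val.map _), Multiset.map_map]
  rfl

theorem blockSums_symSetoid_eq_iff {A : Type*} [Fintype A] (K : Setoid A) {n : ℕ}
    {f f' : Fin n → A → ℂ} (c : Quotient K) (hf : ∀ t, blockSums K (f t) c = 1)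
    (hf' : ∀ t, blockSums K (f' t) c = 1) :
    (∀ b, ∑ a with (symSetoid K n).r a b, ∏ t, f t (a t) =
        ∑ a with (symSetoid K n).r a b, ∏ t, f' t (a t)) ↔
      univ.val.map (fun t => blockSums K (f t)) = univ.val.map fun t => blockSums K (f' t) := by
  have hcoeff : ∀ (g : Fin n → A → ℂ) m,
      (∏ t, MvPolynomial.sumSMulX (blockSums K (g t))).coeff m =
        ∑ a : Fin n → A with univ.val.map (fun t => Quotient.mk K (a t)) = Finsupp.toMultiset m,
          ∏ t, g t (a t) := fun g m => by
    simp only [prod_sumSMulX_blockSums, MvPolynomial.coeff_sum, MvPolynomial.coeff_monomial,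
      Finset.sum_filter, Multiset.toFinsupp_eq_iff]
  have hprod : ∀ g : Fin n → A → ℂ,
      ((univ.val.map fun t => blockSums K (g t)).map MvPolynomial.sumSMulX).prod =
        ∏ t, MvPolynomial.sumSMulX (blockSums K (g t)) := fun g => by
    rw [Multiset.map_map]; rfl
  constructor
  · intro h
    refine multiset_eq_of_prod_sumSMulX_eq c (by simpa using hf) (by simpa using hf') ?_
    rw [hprod, hprod]
    ext m
    rw [hcoeff, hcoeff]
    by_cases hm : ∃ b : Fin n → A,
        univ.val.map (fun t => Quotient.mk K (b t)) = Finsupp.toMultiset m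
    · obtain ⟨b, hb⟩ := hm
      simpa only [← hb, ← symSetoid_r_iff] using h b
    · push Not at hm
      simp only [hm, Finset.filter_false, Finset.sum_empty]
  · intro h b
    have hm := congrArg (MvPolynomial.coeff
      (Multiset.toFinsupp (univ.val.map fun t => Quotient.mk K (b t))))
      ((hprod f).symm.trans ((congrArg (fun S => (S.map MvPolynomial.sumSMulX).prod) h).trans (hprod f')))
    simpa only [hcoeff, Multiset.toFinsupp_toMultiset, ← symSetoid_r_iff] using hm

theorem apply_eq_prod_comp1 {A : Type*} [AddCommGroup A] {n : ℕ} (χ : AddChar (Fin n → A) ℂ) (x : Fin n → A) :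
    χ x = ∏ t, comp1 χ t (x t) := by
  conv_lhs => rw [← Finset.univ_sum_single x]
  exact map_prod χ.toMonoidHom (fun t => Multiplicative.ofAdd (Pi.single t (x t))) univ

theorem comp1_bijective {A : Type*} [AddCommGroup A] {n : ℕ} :
    Function.Bijective fun (χ : AddChar (Fin n → A) ℂ) (t : Fin n) => comp1 χ t := by
  constructor
  · intro χ χ' h
    ext x
    rw [apply_eq_prod_comp1, apply_eq_prod_comp1 χ']
    exact Finset.prod_congr rfl fun t _ => congrArg (fun ψ : AddChar A ℂ => ψ (x t)) (congrFun h t)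
  · intro ψ
    refine ⟨∏ t, (ψ t).compAddMonoidHom (Pi.evalAddMonoidHom _ t), ?_⟩
    funext t
    ext x
    simp only [comp1, AddChar.compAddMonoidHom_apply, AddChar.prod_apply]
    rw [Finset.prod_eq_single t]
    · simp
    · intro s _ hs
      simp [hs]
    · simp

theorem blockSum_eq_blockSums (P : Setoid G) (χ : AddChar G ℂ) :
    blockSum P χ = blockSums P χ :=
  funext fun c => (blockSums_apply P χ c).symm

theorem dualBlockSum_eq_blockSums (P : Setoid G) (g : G) :
    dualBlockSum P g = blockSums (dualSetoid P) fun χ => χ g :=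
  funext fun c => by rw [blockSums_apply, dualBlockSum, finsum_eq_sum_of_fintype]

theorem dualSetoid_r_iff {P : Setoid G} {χ χ' : AddChar G ℂ} :
    (dualSetoid P).r χ χ' ↔ blockSums P χ = blockSums P χ' := by
  change blockSum P χ = blockSum P χ' ↔ _
  rw [blockSum_eq_blockSums, blockSum_eq_blockSums, DFunLike.coe_fn_eq]

theorem bidualSetoid_r_iff {P : Setoid G} {g g' : G} :
    (bidualSetoid P).r g g' ↔
      blockSums (dualSetoid P) (fun χ => χ g) = blockSums (dualSetoid P) fun χ => χ g' := by
  change dualBlockSum P g = dualBlockSum P g' ↔ _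
  rw [dualBlockSum_eq_blockSums, dualBlockSum_eq_blockSums, DFunLike.coe_fn_eq]

theorem sum_blockSums {A : Type*} [Fintype A] (K : Setoid A) (f : A → ℂ) :
    (blockSums K f).sum (fun _ z => z) = ∑ a, f a := by
  rw [blockSums, ← Finsupp.sum_finsetSum_index (fun _ => rfl) fun _ _ _ => rfl]
  simp

/-- The principal character forms a block of every dual partition. -/
theorem eq_zero_of_dualSetoid_r {P : Setoid G} {χ : AddChar G ℂ} (h : (dualSetoid P).r χ 0) :
    χ = 0 := by
  by_contra hχ
  have hsum := congrArg (fun v => v.sum fun _ z => z) (dualSetoid_r_iff.mp h)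
  simp [sum_blockSums, AddChar.sum_eq_ite, hχ, eq_comm] at hsum

theorem blockSums_apply_eq_of_singleton {A : Type*} [Fintype A] {K : Setoid A} {b : A}
    (hb : ∀ a, K.r a b → a = b) (f : A → ℂ) : blockSums K f (Quotient.mk K b) = f b := by
  rw [blockSums_apply, Finset.sum_eq_single b]
  · simp
  · intro a _ hab
    rw [if_neg fun h => hab (hb a (Quotient.exact h))]
  · simp

theorem dualSetoid_symSetoid_r_iff {P : Setoid G} {n : ℕ} (h0 : ∀ g : G, P.r g 0 → g = 0)
    {χ χ' : AddChar (Fin n → G) ℂ} :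
    (dualSetoid (symSetoid P n)).r χ χ' ↔
      (symSetoid (dualSetoid P) n).r (fun t => comp1 χ t) (fun t => comp1 χ' t) := by
  have hone : ∀ ψ : AddChar G ℂ, blockSums P ψ (Quotient.mk P 0) = 1 := fun ψ => by
    rw [blockSums_apply_eq_of_singleton h0, AddChar.map_zero_eq_one]
  rw [dualSetoid_r_iff, blockSums_eq_iff, dualSetoid, symSetoid_ker_r_iff]
  simp only [apply_eq_prod_comp1 χ, apply_eq_prod_comp1 χ']
  rw [blockSums_symSetoid_eq_iff P (Quotient.mk P 0) (fun t => hone _) fun t => hone _,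
    ← (Multiset.map_injective (DFunLike.coe_injective (F := Quotient P →₀ ℂ))).eq_iff,
    Multiset.map_map, Multiset.map_map]
  simp only [Function.comp_def, blockSum_eq_blockSums]

theorem bidualSetoid_symSetoid {P : Setoid G} {n : ℕ} (h0 : ∀ g : G, P.r g 0 → g = 0) :
    bidualSetoid (symSetoid P n) = symSetoid (bidualSetoid P) n := by
  ext g g'
  have hone : ∀ x : G,
      blockSums (dualSetoid P) (fun χ => χ x) (Quotient.mk (dualSetoid P) 0) = 1 := fun x => by
    rw [blockSums_apply_eq_of_singleton fun χ => eq_zero_of_dualSetoid_r, AddChar.zero_apply]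
  have hsum : ∀ (x : Fin n → G) χ',
      ∑ χ with (dualSetoid (symSetoid P n)).r χ χ', χ x =
        ∑ ψ with (symSetoid (dualSetoid P) n).r ψ fun t => comp1 χ' t, ∏ t, ψ t (x t) := by
    intro x χ'
    rw [Finset.sum_filter, Finset.sum_filter, ← comp1_bijective.sum_comp]
    simp only [dualSetoid_symSetoid_r_iff h0, ← apply_eq_prod_comp1]
  rw [bidualSetoid_r_iff, blockSums_eq_iff, bidualSetoid, symSetoid_ker_r_iff]
  simp only [hsum]
  rw [← comp1_bijective.surjective.forall (p := fun ψ' =>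
      ∑ ψ with (symSetoid (dualSetoid P) n).r ψ ψ', ∏ t, ψ t (g t) =
        ∑ ψ with (symSetoid (dualSetoid P) n).r ψ ψ', ∏ t, ψ t (g' t)),
    blockSums_symSetoid_eq_iff (dualSetoid P) (f := fun t χ => χ (g t))
      (f' := fun t χ => χ (g' t)) (Quotient.mk _ 0) (fun t => hone _) fun t => hone _,
    ← (Multiset.map_injective
      (DFunLike.coe_injective (F := Quotient (dualSetoid P) →₀ ℂ))).eq_iff,
    Multiset.map_map, Multiset.map_map]
  simp only [Function.comp_def, dualBlockSum_eq_blockSums]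

/-- If the partition `P` of `G` has `{0}` as a block, then the dual of the induced
symmetrized partition `Pⁿ_sym` of `Gⁿ` is the symmetrized partition `(P̂)ⁿ_sym` induced by
the dual partition (under the canonical identification of the character group of `Gⁿ`
with `Ĝⁿ`); consequently, if `P` is Fourier-reflexive, then so is `Pⁿ_sym`. -/
theorem dual_symSetoid (P : Setoid G) (n : ℕ) (hn : 1 ≤ n)
    (h0 : ∀ g : G, P.r g 0 → g = 0) :
    (∀ χ χ' : AddChar (Fin n → G) ℂ,
      (dualSetoid (symSetoid P n)).r χ χ' ↔
        (symSetoid (dualSetoid P) n).r (fun t => comp1 χ t) (fun t => comp1 χ' t)) ∧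
    (bidualSetoid P = P → bidualSetoid (symSetoid P n) = symSetoid P n) := by
  refine ⟨fun χ χ' => dualSetoid_symSetoid_r_iff h0, fun h => ?_⟩
  rw [bidualSetoid_symSetoid h0, h]
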